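/- Let A = ⊕_{i∈ℤ} A_i be a ℤ-graded ring with A_i = 0 for all i < 0, and assume the degree-zero part A_0 is a left artinian ring. If ℓ ∈ ℕ is such that every graded simple right A-module has projective dimension at most ℓ as a right A-module, then every ℤ-graded left A-module has projective dimension at most ℓ as a left A-module. -/

import Mathlib

/-!
Statement 1.  Let `A = ⊕_{i∈ℤ} A_i` be a ℤ-graded ring with `A_i = 0` for `i < 0` and with
`A_0` left artinian.  If every graded simple right `A`-module has projective dimension at
most `ℓ`, then every ℤ-graded left `A`-module has projective dimension at most `ℓ`.
-/

universe u

open DirectSum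

section ProjDim

/-- `pdLE R n M` means `M` admits a projective resolution of length at most `n`
(in the category of all `R`-modules). -/
def pdLE (R : Type u) [Ring R] : ℕ → ∀ (M : Type u) [AddCommGroup M] [Module R M], Prop
  | 0, M, _, _ => Module.Projective R M
  | n+1, M, _, _ => ∃ (P : Type u) (_ : AddCommGroup P) (_ : Module R P)
      (f : P →ₗ[R] M), Module.Projective R P ∧ Function.Surjective f ∧
      pdLE R n ↥(LinearMap.ker f)

/-- The projective dimension of a module, as an element of `ℕ∞` (`⊤` if no finite
projective resolution exists). -/
noncomputable def projDim (R : Type u) [Ring R] (M : Type u) [AddCommGroup M]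
    [Module R M] : ℕ∞ :=
  ⨅ (n : ℕ) (_ : pdLE R n M), (n : ℕ∞)

/-- The (left) global dimension of a ring: the supremum of the projective dimensions of all
left modules.  (The right global dimension of `A` is `globalDim Aᵐᵒᵖ`.) -/
noncomputable def globalDim (R : Type u) [Ring R] : ℕ∞ :=
  ⨆ (M : ModuleCat.{u} R), projDim R M

end ProjDim

section Graded

variable (A : Type u) [Ring A] (𝒜 : ℤ → AddSubgroup A)

/-- A grading `ℳ` on a left `A`-module `M` compatible with the grading `𝒜` on `A`:
`M = ⊕_j ℳ j` and `𝒜 i • ℳ j ⊆ ℳ (i + j)`. -/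
def IsGradedModule (M : Type u) [AddCommGroup M] [Module A M]
    (ℳ : ℤ → AddSubgroup M) : Prop :=
  DirectSum.IsInternal ℳ ∧
    ∀ (i j : ℤ) (a : A) (m : M), a ∈ 𝒜 i → m ∈ ℳ j → a • m ∈ ℳ (i + j)

/-- A grading on a right `A`-module (= left `Aᵐᵒᵖ`-module): `ℳ j • 𝒜 i ⊆ ℳ (j + i)`. -/
def IsGradedRightModule (M : Type u) [AddCommGroup M] [Module Aᵐᵒᵖ M]
    (ℳ : ℤ → AddSubgroup M) : Prop :=
  DirectSum.IsInternal ℳ ∧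
    ∀ (i j : ℤ) (a : A) (m : M), a ∈ 𝒜 i → m ∈ ℳ j → (MulOpposite.op a) • m ∈ ℳ (j + i)

/-- A submodule `p` is graded (w.r.t. the grading `ℳ`) if it is the (internal direct) sum of
its homogeneous parts `p ∩ ℳ j`. -/
def IsGradedSubmodule {R : Type*} [Ring R] {M : Type u} [AddCommGroup M] [Module R M]
    (ℳ : ℤ → AddSubgroup M) (p : Submodule R M) : Prop :=
  p.toAddSubgroup = ⨆ j : ℤ, (p.toAddSubgroup ⊓ ℳ j)

/-- A graded-simple left `A`-module: a nonzero graded module whose only graded submodules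
are `⊥` and `⊤`. -/
def IsGradedSimple (M : Type u) [AddCommGroup M] [Module A M]
    (ℳ : ℤ → AddSubgroup M) : Prop :=
  IsGradedModule A 𝒜 M ℳ ∧ Nontrivial M ∧
    ∀ p : Submodule A M, IsGradedSubmodule ℳ p → p = ⊥ ∨ p = ⊤

/-- A graded-simple right `A`-module. -/
def IsGradedSimpleRight (M : Type u) [AddCommGroup M] [Module Aᵐᵒᵖ M]
    (ℳ : ℤ → AddSubgroup M) : Prop :=
  IsGradedRightModule A 𝒜 M ℳ ∧ Nontrivial M ∧
    ∀ p : Submodule Aᵐᵒᵖ M, IsGradedSubmodule ℳ p → p = ⊥ ∨ p = ⊤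

end Graded

/-!
Let `I` be the preimage in `A` of the Jacobson radical of `A₀`. Then `A ⧸ I` is semisimple, its
simple right modules are graded simple in degree zero, and some power of `I` lies in `A_{>0}`. The
character module `D` of the right module `A ⧸ I` is therefore a left `A`-module of injective
dimension at most `ℓ`, and it is a cogenerator for the left modules over `A ⧸ I`.

Testing against `D` detects projectivity of a graded module `K` bounded below with
`Ext¹(K, D) = 0`: if `L` is the kernel of a graded free cover `F → K`, then maps `L → D` extend to
`F`, so `L ∩ I F = I L` and `L ⧸ I L` is a direct summand of `F ⧸ I F`. A lift `F → L` of the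
projection, replaced by its degree-preserving part, restricts to an endomorphism `1 - ν` of `L` with
`ν L ⊆ I L`. Hence `νⁿ L ⊆ Iⁿ L`, which for large `n` lies in degrees as high as we like because
`L` is bounded below. So `ν` is locally nilpotent, `1 - ν` is bijective, and `L` splits off `F`.

Dimension shifting bounds the projective dimension of every graded module bounded below by `ℓ`, and
an arbitrary graded module `X` is the union of its bounded below submodules `X_{≥ -k}`, whose
successive quotients are again bounded below, so that Auslander's lemma applies.
-/

section ProjectiveDimension

open CategoryTheory

variable {R : Type u} [Ring R]

theorem pdLE_iff_hasProjectiveDimensionLE (n : ℕ) (M : Type u) [AddCommGroup M] [Module R M] :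
    pdLE R n M ↔ HasProjectiveDimensionLE (ModuleCat.of R M) n := by
  induction n generalizing M with
  | zero =>
    exact (IsProjective.iff_projective M).trans (projective_iff_hasProjectiveDimensionLE_zero _)
  | succ n ih =>
    have cover {P : Type u} [AddCommGroup P] [Module R P] [Module.Projective R P]
        {f : P →ₗ[R] M} (hf : Function.Surjective f) :
        HasProjectiveDimensionLE (ModuleCat.of R M) (n + 1) ↔ pdLE R n (LinearMap.ker f) :=
      ((LinearMap.shortExact_shortComplexKer hf).hasProjectiveDimensionLT_X₃_iff n
        ((IsProjective.iff_projective P).mp ‹_›)).trans (ih _).symm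
    refine ⟨fun ⟨P, _, _, f, _, hf, hk⟩ => (cover hf).mpr hk, fun h => ?_⟩
    have hf := Finsupp.linearCombination_id_surjective R M
    exact ⟨M →₀ R, _, _, _, inferInstance, hf, (cover hf).mp h⟩

theorem projDim_le_iff (n : ℕ) (M : Type u) [AddCommGroup M] [Module R M] :
    projDim R M ≤ n ↔ HasProjectiveDimensionLE (ModuleCat.of R M) n := by
  rw [← pdLE_iff_hasProjectiveDimensionLE]
  refine ⟨fun h => ?_, fun h => iInf₂_le n h⟩
  by_contra hn
  have hlt : ((n + 1 : ℕ) : ℕ∞) ≤ projDim R M := le_iInf₂ fun k hk => by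
    rw [Nat.cast_le]
    by_contra! hkn
    rw [pdLE_iff_hasProjectiveDimensionLE] at hk hn
    exact hn (hasProjectiveDimensionLT_of_ge _ (k + 1) (n + 1) hkn)
  exact absurd (Nat.cast_le.mp (hlt.trans h)) n.lt_succ_self.not_ge

end ProjectiveDimension

section ExtOfModules

open CategoryTheory Abelian

theorem exists_comp_eq_of_subsingleton_ext_one {C : Type*} [Category* C] [Abelian C] [HasExt C]
    {S : ShortComplex C} (hS : S.ShortExact) {Y : C} [Subsingleton (Ext S.X₃ Y 1)]
    (h : S.X₁ ⟶ Y) : ∃ H : S.X₂ ⟶ Y, S.f ≫ H = h := by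
  obtain ⟨H, hH⟩ := Ext.contravariant_sequence_exact₁ hS Y (Ext.mk₀ h) (add_zero 1)
    (Subsingleton.elim _ _)
  obtain ⟨H, rfl⟩ := (Ext.mk₀_bijective _ _).2 H
  rw [Ext.mk₀_comp_mk₀] at hH
  exact ⟨H, (Ext.mk₀_bijective _ _).1 hH⟩

theorem subsingleton_ext_one_of_forall_exists_comp_eq {C : Type*} [Category* C] [Abelian C]
    [HasExt C] {S : ShortComplex C} (hS : S.ShortExact) [Projective S.X₂] {Y : C}
    (hext : ∀ h : S.X₁ ⟶ Y, ∃ H : S.X₂ ⟶ Y, S.f ≫ H = h) : Subsingleton (Ext S.X₃ Y 1) := by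
  refine subsingleton_of_forall_eq 0 fun x => ?_
  obtain ⟨h, rfl⟩ := Ext.contravariant_sequence_exact₃ hS Y x (Ext.eq_zero_of_projective _)
    (add_zero 1)
  obtain ⟨h, rfl⟩ := (Ext.mk₀_bijective _ _).2 h
  obtain ⟨H, rfl⟩ := hext h
  rw [← Ext.mk₀_comp_mk₀, hS.extClass_comp_assoc]

variable {R : Type u} [Ring R] {D : Type u} [AddCommGroup D] [Module R D]

theorem exists_linearMap_comp_eq_of_subsingleton_ext_one {L N X : Type u} [AddCommGroup L]
    [Module R L] [AddCommGroup N] [Module R N] [AddCommGroup X] [Module R X]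
    [Subsingleton (Ext (ModuleCat.of R X) (ModuleCat.of R D) 1)]
    {f : L →ₗ[R] N} {g : N →ₗ[R] X} (hf : Function.Injective f) (hg : Function.Surjective g)
    (hfg : Function.Exact f g) (h : L →ₗ[R] D) : ∃ H : N →ₗ[R] D, H ∘ₗ f = h := by
  obtain ⟨H, hH⟩ := exists_comp_eq_of_subsingleton_ext_one (Y := ModuleCat.of R D)
    (ModuleCat.shortComplex_shortExact
      (ModuleCat.shortComplexOfCompEqZero f g hfg.linearMap_comp_eq_zero) hfg hf hg)
    (ModuleCat.ofHom h)
  exact ⟨H.hom, congrArg ModuleCat.Hom.hom hH⟩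

theorem exists_le_linearPMap_of_subsingleton_ext_one {N Q : Type u} [AddCommGroup N]
    [Module R N] [AddCommGroup Q] [Module R Q]
    [Subsingleton (Ext (ModuleCat.of R Q) (ModuleCat.of R D) 1)]
    (h : N →ₗ.[R] D) {V : Submodule R N} (hV : h.domain ≤ V) {p : V →ₗ[R] Q}
    (hp : Function.Surjective p) (hker : LinearMap.ker p = h.domain.submoduleOf V) :
    ∃ H : N →ₗ.[R] D, h ≤ H ∧ H.domain = V := by
  have hexact : Function.Exact (Submodule.inclusion hV) p := by
    rw [LinearMap.exact_iff, hker, Submodule.range_inclusion]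
    rfl
  obtain ⟨H, hH⟩ := exists_linearMap_comp_eq_of_subsingleton_ext_one
    (Submodule.inclusion_injective hV) hp hexact h.toFun
  refine ⟨⟨V, H⟩, ⟨hV, fun x y hxy => ?_⟩, rfl⟩
  rw [← LinearPMap.toFun_eq_coe, ← hH]
  exact congrArg H (Subtype.ext hxy)

theorem exists_linearMap_extending_of_forall_exists_le {N : Type*} [AddCommGroup N] [Module R N]
    {T : ℕ → Submodule R N} (hexh : ∀ x, ∃ k, x ∈ T k)
    (step : ∀ k, ∀ f : N →ₗ.[R] D, f.domain = T k → ∃ g : N →ₗ.[R] D, f ≤ g ∧ g.domain = T (k + 1))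
    (f : N →ₗ.[R] D) (hf : f.domain = T 0) : ∃ H : N →ₗ[R] D, ∀ x : f.domain, H x = f x := by
  choose! next hle hdom using step
  let F : ℕ → N →ₗ.[R] D := fun k => Nat.rec f next k
  have hF (k : ℕ) : (F k).domain = T k := by
    induction k with
    | zero => exact hf
    | succ k ih => exact hdom k _ ih
  have hmono : Monotone F := monotone_nat_of_le_succ fun k => hle k _ (hF k)
  have hdir : DirectedOn (· ≤ ·) (Set.range F) := hmono.directed_le.directedOn_range
  have htop (x : N) : x ∈ (LinearPMap.sSup _ hdir).domain := by
    obtain ⟨k, hk⟩ := hexh x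
    exact (LinearPMap.le_sSup hdir ⟨k, rfl⟩).1 (hF k ▸ hk)
  exact ⟨(LinearPMap.sSup _ hdir).toFun ∘ₗ LinearMap.codRestrict _ LinearMap.id htop,
    fun x => ((LinearPMap.le_sSup hdir ⟨0, rfl⟩).2 rfl).symm⟩

variable {X : Type u} [AddCommGroup X] [Module R X] {T : ℕ → Submodule R X}

theorem subsingleton_ext_one_of_filtration (hmono : Monotone T) (hexh : ∀ x, ∃ k, x ∈ T k)
    (hzero : Subsingleton (Ext (ModuleCat.of R (T 0)) (ModuleCat.of R D) 1))
    (hsucc : ∀ k, Subsingleton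
      (Ext (ModuleCat.of R (T (k + 1) ⧸ (T k).submoduleOf (T (k + 1)))) (ModuleCat.of R D) 1)) :
    Subsingleton (Ext (ModuleCat.of R X) (ModuleCat.of R D) 1) := by
  let g : (X →₀ R) →ₗ[R] X := Finsupp.linearCombination R id
  have hg : Function.Surjective g := Finsupp.linearCombination_id_surjective R X
  have : Projective g.shortComplexKer.X₂ := (IsProjective.iff_projective (X →₀ R)).mp inferInstance
  refine subsingleton_ext_one_of_forall_exists_comp_eq (LinearMap.shortExact_shortComplexKer hg)
    fun h => ?_
  let p (k : ℕ) : (T k).comap g →ₗ[R] T k := g.restrict fun _ hx => hx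
  have hp (k : ℕ) : Function.Surjective (p k) := fun ⟨x, hx⟩ => by
    obtain ⟨y, rfl⟩ := hg x
    exact ⟨⟨y, hx⟩, rfl⟩
  obtain ⟨h₀, hle, hdom⟩ := exists_le_linearPMap_of_subsingleton_ext_one
    (⟨LinearMap.ker g, h.hom⟩ : (X →₀ R) →ₗ.[R] D) (LinearMap.ker_le_comap g) (hp 0)
    (by ext; simp [p, Submodule.submoduleOf, Subtype.ext_iff])
  obtain ⟨H, hH⟩ := exists_linearMap_extending_of_forall_exists_le
    (T := fun k => (T k).comap g) (fun x => hexh (g x))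
    (fun k f hf => exists_le_linearPMap_of_subsingleton_ext_one f
      (hf.trans_le (Submodule.comap_mono (hmono k.le_succ)))
      (p := ((T k).submoduleOf (T (k + 1))).mkQ ∘ₗ p (k + 1))
      ((Submodule.mkQ_surjective _).comp (hp (k + 1)))
      (by rw [LinearMap.ker_comp, Submodule.ker_mkQ, hf]; rfl)) h₀ hdom
  refine ⟨ModuleCat.ofHom H, ModuleCat.hom_ext (LinearMap.ext fun x => ?_)⟩
  exact (hH ⟨x, hle.1 x.2⟩).trans (hle.2 rfl).symm

theorem subsingleton_ext_of_filtration (hmono : Monotone T) (hexh : ∀ x, ∃ k, x ∈ T k) (n : ℕ)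
    (D : ModuleCat.{u} R) (hzero : Subsingleton (Ext (ModuleCat.of R (T 0)) D (n + 1)))
    (hsucc : ∀ k, Subsingleton
      (Ext (ModuleCat.of R (T (k + 1) ⧸ (T k).submoduleOf (T (k + 1)))) D (n + 1))) :
    Subsingleton (Ext (ModuleCat.of R X) D (n + 1)) := by
  induction n generalizing D with
  | zero => exact subsingleton_ext_one_of_filtration hmono hexh hzero hsucc
  | succ n ih =>
    obtain ⟨I, _, i, _⟩ := EnoughInjectives.presentation D
    have hS : (ShortComplex.mk _ _ (Limits.cokernel.condition i)).ShortExact :=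
      { exact := ShortComplex.exact_cokernel i }
    have shift (Z : ModuleCat.{u} R) (_ : Subsingleton (Ext Z D (n + 1 + 1))) :
        Subsingleton (Ext Z (Limits.cokernel i) (n + 1)) :=
      subsingleton_of_forall_eq 0 fun x => by
        obtain ⟨y, rfl⟩ := Ext.covariant_sequence_exact₃ Z hS x rfl (Subsingleton.elim _ _)
        rw [y.eq_zero_of_injective, Ext.zero_comp]
    have := ih _ (shift _ hzero) fun k => shift _ (hsucc k)
    exact (postcomp_extClass_surjective_of_projective_X₂ hS _ (n + 1)).subsingleton

theorem hasProjectiveDimensionLE_of_filtration (hmono : Monotone T) (hexh : ∀ x, ∃ k, x ∈ T k)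
    {n : ℕ} (hzero : HasProjectiveDimensionLE (ModuleCat.of R (T 0)) n)
    (hsucc : ∀ k, HasProjectiveDimensionLE
      (ModuleCat.of R (T (k + 1) ⧸ (T k).submoduleOf (T (k + 1)))) n) :
    HasProjectiveDimensionLE (ModuleCat.of R X) n :=
  hasProjectiveDimensionLT_of_enoughInjectives _ _ fun D =>
    subsingleton_ext_of_filtration hmono hexh n D (hzero.subsingleton _ _ _ le_rfl D)
      fun k => (hsucc k).subsingleton _ _ _ le_rfl D

end ExtOfModules

section CharacterModuleOfRightModule

open CategoryTheory MulOpposite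

variable {A : Type u} [Ring A]

/-- The character module of a right module is a left module, via `(a • c) s = c (s a)`. -/
local instance instModuleCharacterModuleOfOp {S : Type*} [AddCommGroup S] [Module Aᵐᵒᵖ S] :
    Module A (CharacterModule S) where
  smul a c := AddMonoidHom.comp c (DistribSMul.toAddMonoidHom S (op a))
  one_smul c := CharacterModule.ext _ fun s => congrArg c (one_smul Aᵐᵒᵖ s)
  mul_smul a b c := CharacterModule.ext _ fun s => congrArg c (mul_smul (op b) (op a) s)
  smul_zero _ := rfl
  smul_add _ _ _ := rfl
  add_smul a b c := CharacterModule.ext _ fun s =>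
    (congrArg c (add_smul (op a) (op b) s)).trans (map_add c _ _)
  zero_smul c := CharacterModule.ext _ fun s => (congrArg c (zero_smul Aᵐᵒᵖ s)).trans (map_zero c)

theorem exists_character_comp_eq {B N : Type*} [AddCommGroup B] [AddCommGroup N] {i : B →+ N}
    (hi : Function.Injective i) (c : B →+ AddCircle (1 : ℚ)) :
    ∃ d : N →+ AddCircle (1 : ℚ), d.comp i = c :=
  CharacterModule.dual_surjective_of_injective i.toIntLinearMap hi c

theorem injective_characterModule_of_projective (P : Type u) [AddCommGroup P] [Module Aᵐᵒᵖ P]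
    [Module.Projective Aᵐᵒᵖ P] : Module.Injective A (CharacterModule P) := by
  refine ⟨fun B N _ _ _ _ i hi g => ?_⟩
  let eval (x : P) : B →+ AddCircle (1 : ℚ) := AddMonoidHom.mk' (g · x) fun b b' => by
    rw [map_add]
    rfl
  -- Each `b ↦ g b x` extends to `N` additively; the dual basis `s` of `P` makes the resulting map
  -- `N → CharacterModule P` linear over `A`.
  choose χ hχ using fun x => exists_character_comp_eq (i := i.toAddMonoidHom) hi (eval x)
  obtain ⟨s, hs⟩ := Module.projective_def'.mp ‹Module.Projective Aᵐᵒᵖ P›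
  let pairing (n : N) : P →+ AddCircle (1 : ℚ) :=
    (Finsupp.liftAddHom fun x => (χ x).comp
      ((AddMonoidHom.flip (smulAddHom A N) n).comp opAddEquiv.symm.toAddMonoidHom)).comp
      s.toAddMonoidHom
  have pairing_apply (n : N) (p : P) :
      pairing n p = (s p).sum fun x a => χ x (unop a • n) := rfl
  refine ⟨{ toFun := pairing, map_add' := fun n n' => ?_, map_smul' := fun a n => ?_ },
    fun b => ?_⟩
  · refine CharacterModule.ext _ fun p => ?_
    change pairing _ p = pairing n p + pairing n' p
    simp only [pairing_apply, smul_add, map_add, Finsupp.sum_add]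
  · refine CharacterModule.ext _ fun p => ?_
    change pairing _ p = pairing n (op a • p)
    rw [pairing_apply, pairing_apply, map_smul, Finsupp.sum_smul_index' (by simp)]
    simp [mul_smul]
  · refine CharacterModule.ext _ fun p => ?_
    change pairing (i b) p = g b p
    have hterm (x : P) (a : Aᵐᵒᵖ) : χ x (unop a • i b) = g b (a • x) := by
      rw [← map_smul]
      refine (DFunLike.congr_fun (hχ x) (unop a • b)).trans ?_
      change g (unop a • b) x = _
      rw [map_smul]
      rfl
    have hsum : (s p).sum (fun x a => a • x) = p := LinearMap.congr_fun hs p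
    simp only [pairing_apply, hterm]
    conv_rhs => rw [← hsum, map_finsuppSum]

/-- The pullback of characters along a map of right modules. -/
def characterPullback {U V : Type*} [AddCommGroup U] [AddCommGroup V] [Module Aᵐᵒᵖ U]
    [Module Aᵐᵒᵖ V] (k : U →ₗ[Aᵐᵒᵖ] V) : CharacterModule V →ₗ[A] CharacterModule U where
  toFun c := AddMonoidHom.comp c k.toAddMonoidHom
  map_add' _ _ := rfl
  map_smul' a c := CharacterModule.ext _ fun x => congrArg c (k.map_smul (op a) x).symm

theorem characterPullback_injective {U V : Type*} [AddCommGroup U] [AddCommGroup V]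
    [Module Aᵐᵒᵖ U] [Module Aᵐᵒᵖ V] {k : U →ₗ[Aᵐᵒᵖ] V} (hk : Function.Surjective k) :
    Function.Injective (characterPullback k) :=
  CharacterModule.dual_injective_of_surjective k.toAddMonoidHom.toIntLinearMap hk

theorem characterPullback_surjective {U V : Type*} [AddCommGroup U] [AddCommGroup V]
    [Module Aᵐᵒᵖ U] [Module Aᵐᵒᵖ V] {k : U →ₗ[Aᵐᵒᵖ] V} (hk : Function.Injective k) :
    Function.Surjective (characterPullback k) :=
  exists_character_comp_eq (i := k.toAddMonoidHom) hk

theorem exact_characterPullback_subtype_ker {P S : Type*} [AddCommGroup P] [AddCommGroup S]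
    [Module Aᵐᵒᵖ P] [Module Aᵐᵒᵖ S] {f : P →ₗ[Aᵐᵒᵖ] S} (hf : Function.Surjective f) :
    Function.Exact (characterPullback f) (characterPullback (LinearMap.ker f).subtype) := by
  refine fun c => ⟨fun hc => ?_, ?_⟩
  · have hker : f.toAddMonoidHom.ker ≤ AddMonoidHom.ker c := fun x hx =>
      DFunLike.congr_fun hc (⟨x, hx⟩ : LinearMap.ker f)
    exact ⟨f.toAddMonoidHom.liftOfSurjective hf ⟨c, hker⟩, CharacterModule.ext _ fun p =>
      AddMonoidHom.liftOfRightInverse_comp_apply _ _ (Function.rightInverse_surjInv hf) ⟨c, hker⟩ p⟩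
  · rintro ⟨c, rfl⟩
    exact CharacterModule.ext _ fun x => (congrArg c x.2).trans (map_zero c)

theorem hasInjectiveDimensionLE_characterModule (n : ℕ) (S : Type u) [AddCommGroup S]
    [Module Aᵐᵒᵖ S] (hS : HasProjectiveDimensionLE (ModuleCat.of Aᵐᵒᵖ S) n) :
    HasInjectiveDimensionLE (ModuleCat.of A (CharacterModule S)) n := by
  induction n generalizing S with
  | zero =>
    have : Module.Projective Aᵐᵒᵖ S := (IsProjective.iff_projective S).mpr
      ((projective_iff_hasProjectiveDimensionLE_zero _).mpr hS)
    exact injective_iff_hasInjectiveDimensionLT_one.mp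
      ((Module.injective_iff_injective_object A _).mp (injective_characterModule_of_projective S))
  | succ n ih =>
    let f : (S →₀ Aᵐᵒᵖ) →ₗ[Aᵐᵒᵖ] S := Finsupp.linearCombination Aᵐᵒᵖ id
    have hf : Function.Surjective f := Finsupp.linearCombination_id_surjective _ S
    have hexact := exact_characterPullback_subtype_ker hf
    have hdual := ModuleCat.shortComplex_shortExact
      (ModuleCat.shortComplexOfCompEqZero _ _ hexact.linearMap_comp_eq_zero) hexact
      (characterPullback_injective hf)
      (characterPullback_surjective (LinearMap.ker f).injective_subtype)
    have hker : HasProjectiveDimensionLE (ModuleCat.of Aᵐᵒᵖ (LinearMap.ker f)) n :=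
      ((LinearMap.shortExact_shortComplexKer hf).hasProjectiveDimensionLT_X₃_iff n
        ((IsProjective.iff_projective (S →₀ Aᵐᵒᵖ)).mp inferInstance)).mp hS
    exact (hdual.hasInjectiveDimensionLT_X₃_iff n
      ((Module.injective_iff_injective_object A _).mp
        (injective_characterModule_of_projective _))).mp (ih _ hker)

end CharacterModuleOfRightModule

section Cogenerator

open CategoryTheory MulOpposite

theorem hasProjectiveDimensionLE_of_isFiniteLength {R : Type u} [Ring R] {J : Ideal R} {n : ℕ}
    (hsimple : ∀ (S : Type u) [AddCommGroup S] [Module R S] [IsSimpleModule R S],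
      Module.IsTorsionBySet R S J → HasProjectiveDimensionLE (ModuleCat.of R S) n)
    {M : Type u} [AddCommGroup M] [Module R M] (hM : IsFiniteLength R M)
    (hJ : Module.IsTorsionBySet R M J) : HasProjectiveDimensionLE (ModuleCat.of R M) n := by
  induction hM with
  | @of_subsingleton M =>
    have := (ModuleCat.isZero_of_subsingleton (ModuleCat.of R M)).hasProjectiveDimensionLT_zero
    exact hasProjectiveDimensionLT_of_ge _ 0 _ (Nat.zero_le _)
  | @of_simple_quotient M _ _ N _ _ ih =>
    exact (ModuleCat.shortComplex_shortExact (ModuleCat.shortComplexOfCompEqZero N.subtype N.mkQ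
      (LinearMap.exact_subtype_mkQ N).linearMap_comp_eq_zero) (LinearMap.exact_subtype_mkQ N)
      N.injective_subtype N.mkQ_surjective).hasProjectiveDimensionLT_X₂ _
      (ih fun _ _ => Subtype.ext (@hJ _ _)) (hsimple _ (hJ.quotient N))

theorem isTorsionBySet_quotient {R : Type*} [Ring R] (J : Ideal R) [J.IsTwoSided] :
    Module.IsTorsionBySet R (R ⧸ J) J :=
  (Module.isTorsionBySet_quotient_iff J _).mpr fun x _ hr => J.mul_mem_right x hr

theorem isSemisimpleModule_of_isTorsionBySet {R M : Type*} [Ring R] [AddCommGroup M] [Module R M]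
    {J : Ideal R} [J.IsTwoSided] [IsSemisimpleRing (R ⧸ J)] (hM : Module.IsTorsionBySet R M J) :
    IsSemisimpleModule R M :=
  letI := hM.module
  hM.isSemisimpleModule_iff.mp inferInstance

variable {A : Type u} [Ring A] (I : Ideal A)

/-- `D` is a cogenerator of the category of modules over `A ⧸ I`, these being identified with the
`A`-modules annihilated by `I`. -/
structure IsCogeneratorModulo (D : Type u) [AddCommGroup D] [Module A D] : Prop where
  isTorsionBySet : Module.IsTorsionBySet A D I
  exists_apply_ne_zero {V : Type u} [AddCommGroup V] [Module A V] :
    Module.IsTorsionBySet A V I → ∀ {v : V}, v ≠ 0 → ∃ g : V →ₗ[A] D, g v ≠ 0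

variable [I.IsTwoSided]

/-- The two-sided ideal `I` as an ideal of the opposite ring. -/
def oppositeIdeal : Ideal Aᵐᵒᵖ :=
  RingHom.ker (RingHom.op (Ideal.Quotient.mk I))

instance : (oppositeIdeal I).IsTwoSided :=
  inferInstanceAs (RingHom.ker _).IsTwoSided

variable {I} in
theorem mem_oppositeIdeal {a : Aᵐᵒᵖ} : a ∈ oppositeIdeal I ↔ unop a ∈ I :=
  (op_eq_zero_iff _).trans Ideal.Quotient.eq_zero_iff_mem

theorem isFiniteLength_quotient_oppositeIdeal [IsSemisimpleRing (A ⧸ I)] :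
    IsFiniteLength Aᵐᵒᵖ (Aᵐᵒᵖ ⧸ oppositeIdeal I) := by
  have hsurj : Function.Surjective (RingHom.op (Ideal.Quotient.mk I)) :=
    op_surjective.comp (Ideal.Quotient.mk_surjective.comp unop_surjective)
  have : IsSemisimpleRing (Aᵐᵒᵖ ⧸ oppositeIdeal I) :=
    (RingHom.quotientKerEquivOfSurjective hsurj).symm.isSemisimpleRing
  have := isSemisimpleModule_of_isTorsionBySet (isTorsionBySet_quotient (oppositeIdeal I))
  exact isFiniteLength_iff_isNoetherian_isArtinian.mpr ⟨inferInstance, inferInstance⟩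

attribute [local instance] instModuleCharacterModuleOfOp

theorem isCogeneratorModulo_characterModule :
    IsCogeneratorModulo I (CharacterModule (Aᵐᵒᵖ ⧸ oppositeIdeal I)) where
  isTorsionBySet c a := CharacterModule.ext _ fun s =>
    (congrArg c (@isTorsionBySet_quotient _ _ (oppositeIdeal I) _ s
      ⟨op a, mem_oppositeIdeal.mpr a.2⟩)).trans (map_zero c)
  exists_apply_ne_zero {V} _ _ hV v hv := by
    obtain ⟨χ, hχ⟩ := CharacterModule.exists_character_apply_ne_zero_of_ne_zero hv
    let orbit (w : V) : Aᵐᵒᵖ ⧸ oppositeIdeal I →+ V :=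
      QuotientAddGroup.lift _
        (((smulAddHom A V).flip w).comp (opAddEquiv (α := A)).symm.toAddMonoidHom)
        fun a ha => AddMonoidHom.mem_ker.mpr (@hV w ⟨unop a, mem_oppositeIdeal.mp ha⟩)
    refine ⟨{ toFun w := χ.comp (orbit w), map_add' w w' := ?_, map_smul' b w := ?_ }, fun h => ?_⟩
    · refine CharacterModule.ext _ ((Submodule.mkQ_surjective _).forall.mpr fun a => ?_)
      exact (congrArg χ (smul_add (unop a) w w')).trans (map_add χ _ _)
    · refine CharacterModule.ext _ ((Submodule.mkQ_surjective _).forall.mpr fun a => ?_)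
      exact congrArg χ (mul_smul (unop a) b w).symm
    · exact hχ ((congrArg χ (one_smul A v)).symm.trans
        (DFunLike.congr_fun h (Submodule.Quotient.mk 1)))

theorem exists_isCogeneratorModulo_hasInjectiveDimensionLE [IsSemisimpleRing (A ⧸ I)] {n : ℕ}
    (hsimple : ∀ (S : Type u) [AddCommGroup S] [Module Aᵐᵒᵖ S] [IsSimpleModule Aᵐᵒᵖ S],
      Module.IsTorsionBySet Aᵐᵒᵖ S (oppositeIdeal I) →
        HasProjectiveDimensionLE (ModuleCat.of Aᵐᵒᵖ S) n) :
    ∃ D : ModuleCat.{u} A, IsCogeneratorModulo I D ∧ HasInjectiveDimensionLE D n :=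
  ⟨_, isCogeneratorModulo_characterModule I, hasInjectiveDimensionLE_characterModule n _
    (hasProjectiveDimensionLE_of_isFiniteLength hsimple (isFiniteLength_quotient_oppositeIdeal I)
      (isTorsionBySet_quotient _))⟩

end Cogenerator

section Radical

open Submodule

variable {R F : Type*} [Ring R] [AddCommGroup F] [Module R F] {I : Ideal R}

theorem mem_smul_top_of_forall_exists_extension {R F D : Type u} [Ring R] {I : Ideal R}
    [AddCommGroup F] [Module R F] [AddCommGroup D] [Module R D] (hD : IsCogeneratorModulo I D)
    {L : Submodule R F} (hext : ∀ h : L →ₗ[R] D, ∃ H : F →ₗ[R] D, H ∘ₗ L.subtype = h) {l : L}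
    (hl : (l : F) ∈ I • (⊤ : Submodule R F)) : l ∈ I • (⊤ : Submodule R L) := by
  by_contra hl'
  obtain ⟨g, hg⟩ := hD.exists_apply_ne_zero (Module.isTorsionBySet_quotient_ideal_smul L I)
    ((Submodule.Quotient.mk_eq_zero _).not.mpr hl')
  obtain ⟨H, hH⟩ := hext (g ∘ₗ mkQ _)
  have hker : I • (⊤ : Submodule R F) ≤ LinearMap.ker H := smul_le.mpr fun a ha x _ => by
    rw [LinearMap.mem_ker, map_smul]
    exact @hD.isTorsionBySet (H x) ⟨a, ha⟩
  exact hg ((LinearMap.congr_fun hH l).symm.trans (hker hl))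

theorem exists_retraction_mod_smul_top [I.IsTwoSided] [IsSemisimpleRing (R ⧸ I)]
    [Module.Projective R F] {L : Submodule R F}
    (hL : ∀ l : L, (l : F) ∈ I • (⊤ : Submodule R F) → l ∈ I • (⊤ : Submodule R L)) :
    ∃ φ : F →ₗ[R] L, ∀ l : L, l - φ l ∈ I • (⊤ : Submodule R L) := by
  have hle : I • (⊤ : Submodule R L) ≤ (I • (⊤ : Submodule R F)).comap L.subtype :=
    smul_top_le_comap_smul_top I L.subtype
  let j := mapQ _ _ L.subtype hle
  have hj : Function.Injective j := (injective_iff_map_eq_zero j).mpr <|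
    (mkQ_surjective _).forall.mpr fun l hl =>
      (Quotient.mk_eq_zero _).mpr (hL l ((Quotient.mk_eq_zero _).mp hl))
  have : IsSemisimpleModule R (F ⧸ I • (⊤ : Submodule R F)) :=
    isSemisimpleModule_of_isTorsionBySet (Module.isTorsionBySet_quotient_ideal_smul F I)
  obtain ⟨r, hr⟩ := IsSemisimpleModule.extension_property j hj LinearMap.id
  obtain ⟨φ, hφ⟩ := Module.projective_lifting_property
    (mkQ (I • (⊤ : Submodule R L))) (r ∘ₗ mkQ _) (mkQ_surjective _)
  refine ⟨φ, fun l => (Submodule.Quotient.eq _).mp ?_⟩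
  exact ((LinearMap.congr_fun hφ (l : F)).trans (LinearMap.congr_fun hr (mkQ _ l))).symm

theorem range_pow_le_pow_smul_top {ν : Module.End R F}
    (hν : LinearMap.range ν ≤ I • ⊤) (k : ℕ) : LinearMap.range (ν ^ k) ≤ I ^ k • ⊤ := by
  induction k with
  | zero => rw [Submodule.pow_zero, Ideal.one_eq_top, Submodule.top_smul]; exact le_top
  | succ k ih =>
    rw [pow_succ', Module.End.mul_eq_comp, LinearMap.range_comp]
    calc (LinearMap.range (ν ^ k)).map ν ≤ (I ^ k • ⊤ : Submodule R F).map ν := map_mono ih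
      _ = I ^ k • LinearMap.range ν := by rw [map_smul'', LinearMap.range_eq_map]
      _ ≤ I ^ k • I • ⊤ := smul_mono_right _ hν
      _ = I ^ (k + 1) • ⊤ := by rw [← Submodule.mul_smul, ← Submodule.pow_succ]

theorem bijective_one_sub_of_locally_nilpotent {ν : Module.End R F}
    (hν : ∀ x, ∃ k, (ν ^ k) x = 0) : Function.Bijective (1 - ν : Module.End R F) := by
  refine ⟨(injective_iff_map_eq_zero _).mpr fun x hx => ?_, fun x => ?_⟩ <;>
    obtain ⟨k, hk⟩ := hν x
  · have hfix : ν x = x := (sub_eq_zero.mp hx).symm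
    rwa [Module.End.pow_apply, Function.iterate_fixed hfix] at hk
  · refine ⟨(∑ i ∈ Finset.range k, ν ^ i) x, ?_⟩
    rw [← Module.End.mul_apply, mul_neg_geom_sum, LinearMap.sub_apply, hk, sub_zero,
      Module.End.one_apply]

theorem projective_of_bijective_domRestrict_ker {X : Type*} [AddCommGroup X] [Module R X]
    [Module.Projective R F] {g : F →ₗ[R] X} (hg : Function.Surjective g)
    {r : F →ₗ[R] LinearMap.ker g} (hr : Function.Bijective (r.domRestrict (LinearMap.ker g))) :
    Module.Projective R X := by
  let e := LinearEquiv.ofBijective _ hr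
  have hretract : ∃ l, l ∘ₗ (LinearMap.ker g).subtype = LinearMap.id :=
    ⟨e.symm.toLinearMap ∘ₗ r, LinearMap.ext e.symm_apply_apply⟩
  have hsplit : ∃ s, g ∘ₗ s = LinearMap.id := (((LinearMap.exact_subtype_ker_map g).split_tfae
    (LinearMap.ker g).injective_subtype hg).out 0 1 :).mpr hretract
  exact hsplit.elim fun s hs => Module.Projective.of_split s g hs

end Radical

section ModuleGrading

variable {A : Type*} [Ring A]

/-- A grading of the left `A`-module `M`. It is encoded by the projections `proj d` of `M` onto its
homogeneous components, so that elements of the components need not be coerced to `M`. -/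
structure ModuleGrading (𝒜 : ℤ → AddSubgroup A) (M : Type*) [AddCommGroup M] [Module A M] where
  proj : ℤ → M →+ M
  proj_proj : ∀ d e m, proj d (proj e m) = if d = e then proj e m else 0
  exists_sum_proj : ∀ m, ∃ s : Finset ℤ, ∑ d ∈ s, proj d m = m
  proj_smul : ∀ {i a}, a ∈ 𝒜 i → ∀ d m, proj d (a • m) = a • proj (d - i) m

variable {𝒜 : ℤ → AddSubgroup A}

theorem exists_forall_subset_sum_proj_sub_eq [GradedRing 𝒜] (a : A) (c : ℤ) :
    ∃ s : Finset ℤ, ∀ t, s ⊆ t → ∑ d ∈ t, GradedRing.proj 𝒜 (d - c) a = a := by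
  classical
  refine ⟨(decompose 𝒜 a).support.map (Equiv.addRight c).toEmbedding, fun t ht => ?_⟩
  rw [← Finset.sum_subset ht fun d _ hd => ?_, Finset.sum_map]
  · simpa using sum_support_decompose 𝒜 a
  · have hd' : d - c ∉ (decompose 𝒜 a).support := fun h =>
      hd (Finset.mem_map.mpr ⟨d - c, h, sub_add_cancel d c⟩)
    simpa using hd'

namespace ModuleGrading

variable {M N : Type*} [AddCommGroup M] [Module A M] [AddCommGroup N] [Module A N]
  (G : ModuleGrading 𝒜 M) (H : ModuleGrading 𝒜 N)

theorem proj_self (d : ℤ) (m : M) : G.proj d (G.proj d m) = G.proj d m := by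
  rw [proj_proj, if_pos rfl]

theorem mem_of_forall_proj_mem {S : Type*} [SetLike S M] [AddSubmonoidClass S M] {p : S} {m : M}
    (h : ∀ d, G.proj d m ∈ p) : m ∈ p := by
  obtain ⟨s, hs⟩ := G.exists_sum_proj m
  exact hs ▸ sum_mem fun d _ => h d

theorem map_proj_eq_proj_map {g : M →ₗ[A] N}
    (hg : ∀ d m, H.proj d (g (G.proj d m)) = g (G.proj d m)) (d : ℤ) (m : M) :
    g (G.proj d m) = H.proj d (g m) := by
  obtain ⟨s, hs⟩ := G.exists_sum_proj m
  conv_rhs => rw [← hs, map_sum, map_sum]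
  conv_lhs => rw [← hs, map_sum, map_sum]
  refine Finset.sum_congr rfl fun e _ => ?_
  rw [G.proj_proj, ← hg e, H.proj_proj]
  split_ifs
  · exact (hg e m).symm
  · exact map_zero g

theorem proj_mem_ker {g : M →ₗ[A] N} (hg : ∀ d m, g (G.proj d m) = H.proj d (g m)) (d : ℤ)
    (m : M) (hm : m ∈ LinearMap.ker g) : G.proj d m ∈ LinearMap.ker g := by
  rw [LinearMap.mem_ker, hg, LinearMap.mem_ker.mp hm, map_zero]

theorem nonempty_of_isGradedModule {A M : Type u} [Ring A] {𝒜 : ℤ → AddSubgroup A}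
    [AddCommGroup M] [Module A M] {ℳ : ℤ → AddSubgroup M} (h : IsGradedModule A 𝒜 M ℳ) :
    Nonempty (ModuleGrading 𝒜 M) := by
  classical
  let _ := h.1.chooseDecomposition
  refine ⟨
    { proj d := (ℳ d).subtype.comp
        ((DFinsupp.evalAddMonoidHom d).comp (decomposeAddEquiv ℳ).toAddMonoidHom)
      proj_proj d e m := ?_
      exists_sum_proj m := ⟨_, sum_support_decompose ℳ m⟩
      proj_smul {i a} ha d m := ?_ }⟩
  · change (decompose ℳ (decompose ℳ m e : M) d : M) = ite _ (decompose ℳ m e : M) 0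
    split_ifs with hde
    · rw [hde, decompose_coe, of_eq_same]
    · rw [decompose_of_mem_ne ℳ (decompose ℳ m e).2 (Ne.symm hde)]
  · change (decompose ℳ (a • m) d : M) = a • (decompose ℳ m (d - i) : M)
    induction m using Decomposition.inductionOn ℳ with
    | zero => simp
    | @homogeneous j m =>
      have ham := h.2 i j a m ha m.2
      by_cases hjd : j = d - i
      · rw [show d = i + j by lia, decompose_of_mem_same ℳ ham, add_sub_cancel_left,
          decompose_of_mem_same ℳ m.2]
      · rw [decompose_of_mem_ne ℳ ham (by lia), decompose_of_mem_ne ℳ m.2 hjd, smul_zero]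
    | add m m' hm hm' =>
      simp only [smul_add, decompose_add, DirectSum.add_apply, AddSubgroup.coe_add, hm, hm']

/-- The grading induced on a homogeneous submodule. -/
def submodule {p : Submodule A M} (hp : ∀ d, ∀ m ∈ p, G.proj d m ∈ p) : ModuleGrading 𝒜 p where
  proj d := ((G.proj d).comp p.toAddSubgroup.subtype).codRestrict p fun m => hp d m m.2
  proj_proj d e m := Subtype.ext <| by
    change G.proj d (G.proj e m) = _
    rw [G.proj_proj]
    split_ifs <;> rfl
  exists_sum_proj m := (G.exists_sum_proj m).imp fun s hs => Subtype.ext <| by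
    rw [AddSubmonoidClass.coe_finsetSum]
    exact hs
  proj_smul ha d m := Subtype.ext (G.proj_smul ha d m)

/-- The grading of a module that is concentrated in degree zero. -/
def concentrated (hM : ∀ i ≠ 0, ∀ a ∈ 𝒜 i, ∀ m : M, a • m = 0) : ModuleGrading 𝒜 M where
  proj d := if d = 0 then AddMonoidHom.id M else 0
  proj_proj d e m := by
    by_cases he : e = 0
    · subst he; split_ifs <;> rfl
    · simp [he]
  exists_sum_proj m := ⟨{0}, by simp⟩
  proj_smul {i a} ha d m := by
    by_cases hi : i = 0
    · subst hi
      rw [sub_zero]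
      split_ifs
      · rfl
      · exact (smul_zero a).symm
    · split_ifs <;> simp [hM i hi a ha]

/-- The grading of the free module on generators `x` of degree `deg x`. -/
noncomputable def free (𝒜 : ℤ → AddSubgroup A) [GradedRing 𝒜] {ι : Type*} (deg : ι → ℤ) :
    ModuleGrading 𝒜 (ι →₀ A) where
  proj d := AddMonoidHom.mk'
    (fun f => Finsupp.onFinset f.support (fun x => GradedRing.proj 𝒜 (d - deg x) (f x))
      fun x hx => Finsupp.mem_support_iff.mpr fun h => hx (by rw [h, map_zero]))
    fun f g => Finsupp.ext fun x => by simp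
  proj_proj d e f := Finsupp.ext fun x => by
    change GradedRing.proj 𝒜 (d - deg x) (GradedRing.proj 𝒜 (e - deg x) (f x)) = _
    simp only [GradedRing.proj_apply]
    split_ifs with hde
    · rw [hde, decompose_of_mem_same 𝒜 (SetLike.coe_mem _)]
      rfl
    · exact decompose_of_mem_ne 𝒜 (SetLike.coe_mem _) (by lia)
  exists_sum_proj f := by
    classical
    choose s hs using exists_forall_subset_sum_proj_sub_eq (𝒜 := 𝒜)
    refine ⟨f.support.biUnion fun x => s (f x) (deg x), Finsupp.ext fun x => ?_⟩
    rw [Finsupp.finsetSum_apply]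
    change ∑ d ∈ _, GradedRing.proj 𝒜 (d - deg x) (f x) = f x
    by_cases hx : x ∈ f.support
    · exact hs (f x) (deg x) _ (Finset.subset_biUnion_of_mem (fun x => s (f x) (deg x)) hx)
    · rw [Finsupp.notMem_support_iff.mp hx]
      simp
  proj_smul {i a} ha d f := Finsupp.ext fun x => by
    change GradedRing.proj 𝒜 (d - deg x) (a * f x) = a * GradedRing.proj 𝒜 (d - i - deg x) (f x)
    rw [show d - deg x = i + (d - i - deg x) by ring]
    exact coe_decompose_mul_add_of_left_mem 𝒜 ha

theorem free_proj_single [GradedRing 𝒜] {ι : Type*} (deg : ι → ℤ) (d : ℤ) (x : ι) (a : A) :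
    (free 𝒜 deg).proj d (Finsupp.single x a) =
      Finsupp.single x (GradedRing.proj 𝒜 (d - deg x) a) := by
  classical
  refine Finsupp.ext fun y => ?_
  change GradedRing.proj 𝒜 (d - deg y) (Finsupp.single x a y) = _
  rcases eq_or_ne x y with rfl | hxy
  · simp only [Finsupp.single_eq_same]
  · simp only [Finsupp.single_eq_of_ne hxy.symm, map_zero]

/-- The degree-preserving part of a linear map out of a graded free module. -/
noncomputable def homogeneousPart {ι : Type*} (deg : ι → ℤ) (φ : (ι →₀ A) →ₗ[A] M) :
    (ι →₀ A) →ₗ[A] M :=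
  Finsupp.linearCombination A fun x => G.proj (deg x) (φ (Finsupp.single x 1))

theorem homogeneousPart_proj [GradedRing 𝒜] {ι : Type*} (deg : ι → ℤ) (φ : (ι →₀ A) →ₗ[A] M)
    (d : ℤ) (f : ι →₀ A) : G.homogeneousPart deg φ ((free 𝒜 deg).proj d f) =
      G.proj d (φ ((free 𝒜 deg).proj d f)) := by
  induction f using Finsupp.induction_linear with
  | zero => simp only [map_zero]
  | add f g hf hg => simp only [map_add, hf, hg]
  | single x a =>
    have hb : GradedRing.proj 𝒜 (d - deg x) a ∈ 𝒜 (d - deg x) := SetLike.coe_mem _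
    rw [free_proj_single, ← Finsupp.smul_single_one x (GradedRing.proj 𝒜 _ a), map_smul, map_smul,
      G.proj_smul hb, sub_sub_cancel, homogeneousPart, Finsupp.linearCombination_single, one_smul]

theorem proj_homogeneousPart [GradedRing 𝒜] {ι : Type*} (deg : ι → ℤ) (φ : (ι →₀ A) →ₗ[A] M)
    (d : ℤ) (f : ι →₀ A) :
    G.proj d (G.homogeneousPart deg φ f) = G.homogeneousPart deg φ ((free 𝒜 deg).proj d f) :=
  (map_proj_eq_proj_map (free 𝒜 deg) G
    (fun d f => by rw [homogeneousPart_proj, proj_self]) d f).symm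

/-- The homogeneous components of degree less than `d₀` vanish. -/
def BoundedBelow (d₀ : ℤ) : Prop :=
  ∀ d < d₀, ∀ m, G.proj d m = 0

variable {G} {d₀ : ℤ}

theorem BoundedBelow.submodule (hG : G.BoundedBelow d₀) {p : Submodule A M}
    (hp : ∀ d, ∀ m ∈ p, G.proj d m ∈ p) : (G.submodule hp).BoundedBelow d₀ :=
  fun d hd m => Subtype.ext (hG d hd m)

theorem BoundedBelow.exists_free_cover [GradedRing 𝒜] (hneg : ∀ i < 0, 𝒜 i = ⊥) {M : Type u}
    [AddCommGroup M] [Module A M] {G : ModuleGrading 𝒜 M} (hG : G.BoundedBelow d₀) :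
    ∃ (ι : Type u) (deg : ι → ℤ) (f : (ι →₀ A) →ₗ[A] M), Function.Surjective f ∧
      (free 𝒜 deg).BoundedBelow d₀ ∧ ∀ d x, f ((free 𝒜 deg).proj d x) = G.proj d (f x) := by
  let ι := {x : ℤ × M // d₀ ≤ x.1 ∧ G.proj x.1 x.2 = x.2}
  let deg : ι → ℤ := fun x => x.1.1
  let f : (ι →₀ A) →ₗ[A] M := Finsupp.linearCombination A fun x => x.1.2
  have hf (x : ι) : f (Finsupp.single x 1) = x.1.2 := by
    rw [Finsupp.linearCombination_single, one_smul]
  refine ⟨ι, deg, f, fun m => ?_, fun d hd v => Finsupp.ext fun x => ?_,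
    fun d v => ?_⟩
  · refine G.mem_of_forall_proj_mem (p := LinearMap.range f) fun d => ?_
    rcases lt_or_ge d d₀ with hd | hd
    · rw [hG d hd]
      exact zero_mem _
    · exact ⟨_, hf ⟨(d, G.proj d m), hd, G.proj_self d m⟩⟩
  · have hmem : GradedRing.proj 𝒜 (d - deg x) (v x) ∈ 𝒜 (d - deg x) := SetLike.coe_mem _
    rwa [hneg _ (sub_neg.mpr (hd.trans_le x.2.1)), AddSubgroup.mem_bot] at hmem
  · have hf_part : G.homogeneousPart deg f = f :=
        Finsupp.lhom_ext' fun x => LinearMap.ext_ring <| by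
      change G.homogeneousPart deg f (Finsupp.single x 1) = f (Finsupp.single x 1)
      rw [homogeneousPart, Finsupp.linearCombination_single, one_smul, hf, x.2.2]
    have hproj := G.proj_homogeneousPart deg f d v
    rw [hf_part] at hproj
    exact hproj.symm

end ModuleGrading

end ModuleGrading

section GradedRadical

variable {A : Type*} [Ring A] (𝒜 : ℤ → AddSubgroup A) [GradedRing 𝒜]

/-- The projection of a nonnegatively graded ring onto its degree zero part. -/
def projZero (hneg : ∀ i < 0, 𝒜 i = ⊥) : A →+* 𝒜 0 where
  toFun a := decompose 𝒜 a 0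
  map_zero' := by rw [decompose_zero]; rfl
  map_add' a b := by rw [decompose_add]; rfl
  map_one' := Subtype.ext (decompose_of_mem_same 𝒜 SetLike.GradedOne.one_mem)
  map_mul' a b := by
    induction a using Decomposition.inductionOn 𝒜 with
    | zero => simp only [zero_mul, decompose_zero, DirectSum.zero_apply]
    | @homogeneous i a =>
      refine Subtype.ext ?_
      change (decompose 𝒜 (a * b) 0 : A) = decompose 𝒜 (a : A) 0 * decompose 𝒜 b 0
      rw [← add_neg_cancel i, coe_decompose_mul_add_of_left_mem 𝒜 a.2, add_neg_cancel]
      rcases lt_trichotomy i 0 with hi | rfl | hi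
      · rw [AddSubgroup.mem_bot.mp ((hneg i hi).le a.2), zero_mul, decompose_zero]
        exact (zero_mul _).symm
      · rw [decompose_of_mem_same 𝒜 a.2, neg_zero]
      · rw [decompose_of_mem_ne 𝒜 a.2 hi.ne', zero_mul,
          AddSubgroup.mem_bot.mp ((hneg (-i) (neg_lt_zero.mpr hi)).le (SetLike.coe_mem _)),
          mul_zero]
    | add a a' ha ha' => simp only [add_mul, decompose_add, DirectSum.add_apply, ha, ha']

variable (hneg : ∀ i < 0, 𝒜 i = ⊥)

/-- The graded Jacobson radical of a nonnegatively graded ring: the elements whose component of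
degree zero lies in the Jacobson radical of the degree zero part. -/
def gradedRadical : Ideal A :=
  RingHom.ker ((Ideal.Quotient.mk (Ring.jacobson (𝒜 0))).comp (projZero 𝒜 hneg))

instance : (gradedRadical 𝒜 hneg).IsTwoSided :=
  inferInstanceAs (RingHom.ker _).IsTwoSided

instance [IsSemiprimaryRing (𝒜 0)] : IsSemisimpleRing (A ⧸ gradedRadical 𝒜 hneg) :=
  have hproj : Function.Surjective (projZero 𝒜 hneg) :=
    fun a => ⟨a, Subtype.ext (decompose_of_mem_same 𝒜 a.2)⟩
  have hsurj : Function.Surjective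
      ((Ideal.Quotient.mk (Ring.jacobson (𝒜 0))).comp (projZero 𝒜 hneg)) :=
    Ideal.Quotient.mk_surjective.comp hproj
  (RingHom.quotientKerEquivOfSurjective hsurj).symm.isSemisimpleRing

variable {𝒜}

theorem mem_gradedRadical {a : A} :
    a ∈ gradedRadical 𝒜 hneg ↔ projZero 𝒜 hneg a ∈ Ring.jacobson (𝒜 0) :=
  Ideal.Quotient.eq_zero_iff_mem

theorem mem_gradedRadical_of_mem {i : ℤ} (hi : i ≠ 0) {a : A} (ha : a ∈ 𝒜 i) :
    a ∈ gradedRadical 𝒜 hneg := by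
  rw [mem_gradedRadical, show projZero 𝒜 hneg a = 0 from
    Subtype.ext (decompose_of_mem_ne 𝒜 ha hi)]
  exact zero_mem _

theorem isHomogeneous_gradedRadical : (gradedRadical 𝒜 hneg).IsHomogeneous 𝒜 := fun i a ha => by
  rcases eq_or_ne i 0 with rfl | hi
  · rw [mem_gradedRadical] at ha ⊢
    rwa [show projZero 𝒜 hneg (decompose 𝒜 a 0) = projZero 𝒜 hneg a from
      Subtype.ext (decompose_of_mem_same 𝒜 (SetLike.coe_mem _))]
  · exact mem_gradedRadical_of_mem hneg hi (SetLike.coe_mem _)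

theorem exists_gradedRadical_pow_le_ker [IsSemiprimaryRing (𝒜 0)] :
    ∃ n, gradedRadical 𝒜 hneg ^ n ≤ RingHom.ker (projZero 𝒜 hneg) := by
  obtain ⟨n, hn⟩ := IsSemiprimaryRing.isNilpotent (R := 𝒜 0)
  have hpow (k : ℕ) :
      gradedRadical 𝒜 hneg ^ k ≤ (Ring.jacobson (𝒜 0) ^ k).comap (projZero 𝒜 hneg) := by
    induction k with
    | zero => rw [Submodule.pow_zero, Submodule.pow_zero, Ideal.one_eq_top, Ideal.one_eq_top]; rfl
    | succ k ih =>
      rw [Submodule.pow_succ, Submodule.pow_succ, Ideal.mul_le]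
      intro a ha b hb
      rw [Ideal.mem_comap, map_mul]
      exact Ideal.mul_mem_mul (ih ha) ((mem_gradedRadical hneg).mp hb)
  exact ⟨n, (hpow n).trans (hn ▸ le_rfl)⟩

end GradedRadical
section Truncation

variable {A : Type*} [Ring A] {𝒜 : ℤ → AddSubgroup A} [GradedRing 𝒜]
  {M : Type*} [AddCommGroup M] [Module A M] (G : ModuleGrading 𝒜 M)

namespace ModuleGrading

open scoped Classical in
theorem proj_smul_eq_sum (d : ℤ) (a : A) (m : M) : G.proj d (a • m) =
    ∑ i ∈ (decompose 𝒜 a).support, (decompose 𝒜 a i : A) • G.proj (d - i) m := by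
  conv_lhs => rw [← sum_support_decompose 𝒜 a, Finset.sum_smul, map_sum]
  exact Finset.sum_congr rfl fun i _ => G.proj_smul (SetLike.coe_mem _) d m

theorem proj_mem_smul_top {I : Ideal A} (hI : I.IsHomogeneous 𝒜) (d : ℤ) {m : M}
    (hm : m ∈ I • (⊤ : Submodule A M)) : G.proj d m ∈ I • (⊤ : Submodule A M) := by
  refine Submodule.smul_induction_on hm (fun a ha m _ => ?_) fun m m' hm hm' => ?_
  · rw [G.proj_smul_eq_sum]
    exact sum_mem fun i _ => Submodule.smul_mem_smul (hI i ha) trivial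
  · rw [map_add]
    exact add_mem hm hm'

theorem sub_homogeneousPart_mem_smul_top {I : Ideal A} (hI : I.IsHomogeneous 𝒜) {ι : Type*}
    {deg : ι → ℤ} {j : M →ₗ[A] ι →₀ A} (hj : ∀ d m, j (G.proj d m) = (free 𝒜 deg).proj d (j m))
    {φ : (ι →₀ A) →ₗ[A] M} (hφ : ∀ m, m - φ (j m) ∈ I • (⊤ : Submodule A M)) (m : M) :
    m - G.homogeneousPart deg φ (j m) ∈ I • (⊤ : Submodule A M) := by
  refine G.mem_of_forall_proj_mem fun d => ?_
  have hcomp : G.proj d (m - G.homogeneousPart deg φ (j m)) =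
      G.proj d (G.proj d m - φ (j (G.proj d m))) := by
    rw [map_sub, map_sub, proj_self, proj_homogeneousPart, homogeneousPart_proj, hj]
  exact hcomp ▸ G.proj_mem_smul_top hI d (hφ _)

variable (hneg : ∀ i < 0, 𝒜 i = ⊥)

/-- The submodule of elements without components of degree less than `d₀`. -/
def truncGE (d₀ : ℤ) : Submodule A M where
  carrier := {m | ∀ d < d₀, G.proj d m = 0}
  zero_mem' _ _ := map_zero _
  add_mem' hm hm' d hd := by rw [map_add, hm d hd, hm' d hd, add_zero]
  smul_mem' a m hm d hd := by
    rw [G.proj_smul_eq_sum]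
    refine Finset.sum_eq_zero fun i _ => ?_
    rcases lt_or_ge i 0 with hi | hi
    · rw [AddSubgroup.mem_bot.mp ((hneg i hi).le (SetLike.coe_mem _)), zero_smul]
    · rw [hm _ (by lia), smul_zero]

variable {G}

theorem proj_mem_truncGE (d₀ d : ℤ) {m : M} (hm : m ∈ G.truncGE hneg d₀) :
    G.proj d m ∈ G.truncGE hneg d₀ := fun e he => by
  rw [G.proj_proj]
  split_ifs with hed
  · exact hed ▸ hm e he
  · rfl

theorem exists_mem_truncGE (m : M) : ∃ k : ℕ, m ∈ G.truncGE hneg (-k) := by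
  obtain ⟨s, hs⟩ := G.exists_sum_proj m
  refine ⟨s.sup Int.natAbs, fun d hd => ?_⟩
  rw [← hs, map_sum]
  refine Finset.sum_eq_zero fun e he => ?_
  have := Finset.le_sup (f := Int.natAbs) he
  rw [G.proj_proj, if_neg (by lia)]

theorem smul_mem_truncGE_add_one {d : ℤ} {a : A} (ha : projZero 𝒜 hneg a = 0) {m : M}
    (hm : m ∈ G.truncGE hneg d) : a • m ∈ G.truncGE hneg (d + 1) := fun e he => by
  rw [G.proj_smul_eq_sum]
  refine Finset.sum_eq_zero fun i _ => ?_
  rcases lt_trichotomy i 0 with hi | rfl | hi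
  · rw [AddSubgroup.mem_bot.mp ((hneg i hi).le (SetLike.coe_mem _)), zero_smul]
  · rw [show decompose 𝒜 a 0 = 0 from ha, ZeroMemClass.coe_zero, zero_smul]
  · rw [hm _ (by lia), smul_zero]

theorem ker_projZero_pow_smul_truncGE_le (n : ℕ) (d : ℤ) :
    RingHom.ker (projZero 𝒜 hneg) ^ n • G.truncGE hneg d ≤ G.truncGE hneg (d + n) := by
  induction n generalizing d with
  | zero => rw [Nat.cast_zero, add_zero]; exact Submodule.smul_le_right
  | succ n ih =>
    have hstep : RingHom.ker (projZero 𝒜 hneg) • G.truncGE hneg d ≤ G.truncGE hneg (d + 1) :=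
      Submodule.smul_le.mpr fun a ha m hm => smul_mem_truncGE_add_one hneg ha hm
    rw [Submodule.pow_succ, Submodule.mul_smul, Nat.cast_succ, add_comm (n : ℤ), ← add_assoc]
    exact (smul_mono_right _ hstep).trans (ih (d + 1))

theorem BoundedBelow.exists_pow_apply_eq_zero {d₀ : ℤ} (hG : G.BoundedBelow d₀)
    [IsSemiprimaryRing (𝒜 0)] {ν : Module.End A M}
    (hν : LinearMap.range ν ≤ gradedRadical 𝒜 hneg • ⊤)
    (hνproj : ∀ d m, ν (G.proj d m) = G.proj d (ν m)) (m : M) : ∃ k, (ν ^ k) m = 0 := by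
  obtain ⟨N, hN⟩ := exists_gradedRadical_pow_le_ker hneg
  have hrange : LinearMap.range (ν ^ N) ≤ RingHom.ker (projZero 𝒜 hneg) • ⊤ :=
    (range_pow_le_pow_smul_top hν N).trans (Submodule.smul_mono_left hN)
  have htop : (⊤ : Submodule A M) ≤ G.truncGE hneg d₀ := fun m _ d hd => hG d hd m
  have htrunc (n : ℕ) : (ν ^ (N * n)) m ∈ G.truncGE hneg (d₀ + n) := by
    rw [pow_mul]
    exact ker_projZero_pow_smul_truncGE_le hneg n d₀
      (smul_mono_right _ htop (range_pow_le_pow_smul_top hrange n ⟨m, rfl⟩))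
  have hpow (k : ℕ) (d : ℤ) : (ν ^ k) (G.proj d m) = G.proj d ((ν ^ k) m) := by
    rw [Module.End.pow_apply, Module.End.pow_apply]
    exact Function.Commute.iterate_left (hνproj d) k m
  obtain ⟨s, hs⟩ := G.exists_sum_proj m
  obtain ⟨n, hn⟩ : ∃ n : ℕ, ∀ d ∈ s, d < d₀ + n := by
    obtain ⟨b, hb⟩ := s.bddAbove
    exact ⟨(b + 1 - d₀).toNat, fun d hd => by have := hb hd; lia⟩
  refine ⟨N * n, ?_⟩
  rw [← hs, map_sum]
  exact Finset.sum_eq_zero fun d hd => (hpow _ d).trans (htrunc n d (hn d hd))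

theorem BoundedBelow.bijective_of_sub_apply_mem_smul_top {d₀ : ℤ} (hG : G.BoundedBelow d₀)
    [IsSemiprimaryRing (𝒜 0)] {r : Module.End A M}
    (hr : ∀ m, m - r m ∈ gradedRadical 𝒜 hneg • (⊤ : Submodule A M))
    (hrproj : ∀ d m, r (G.proj d m) = G.proj d (r m)) : Function.Bijective r := by
  have hν : LinearMap.range (1 - r) ≤ gradedRadical 𝒜 hneg • ⊤ := by
    rintro _ ⟨m, rfl⟩
    exact hr m
  rw [← sub_sub_cancel 1 r]
  refine bijective_one_sub_of_locally_nilpotent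
    (hG.exists_pow_apply_eq_zero hneg hν fun d m => ?_)
  rw [LinearMap.sub_apply, LinearMap.sub_apply, Module.End.one_apply, Module.End.one_apply, hrproj,
    map_sub]

end ModuleGrading

end Truncation

section BoundedBelowModules

open CategoryTheory Abelian

variable {A : Type u} [Ring A] {𝒜 : ℤ → AddSubgroup A} [GradedRing 𝒜] [IsSemiprimaryRing (𝒜 0)]
  (hneg : ∀ i < 0, 𝒜 i = ⊥)

namespace ModuleGrading

theorem BoundedBelow.projective_of_subsingleton_ext_one {K D : Type u} [AddCommGroup K]
    [Module A K] [AddCommGroup D] [Module A D] {G : ModuleGrading 𝒜 K} {d₀ : ℤ}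
    (hG : G.BoundedBelow d₀) (hD : IsCogeneratorModulo (gradedRadical 𝒜 hneg) D)
    [Subsingleton (Ext (ModuleCat.of A K) (ModuleCat.of A D) 1)] : Module.Projective A K := by
  obtain ⟨ι, deg, f, hf, hfree, hfproj⟩ := hG.exists_free_cover hneg
  have hker := (free 𝒜 deg).proj_mem_ker G hfproj
  let L := (free 𝒜 deg).submodule hker
  obtain ⟨φ, hφ⟩ := exists_retraction_mod_smul_top (I := gradedRadical 𝒜 hneg)
    fun l => mem_smul_top_of_forall_exists_extension hD
      (exists_linearMap_comp_eq_of_subsingleton_ext_one (LinearMap.ker f).injective_subtype hf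
        (LinearMap.exact_subtype_ker_map f)) (l := l)
  exact projective_of_bijective_domRestrict_ker hf (r := L.homogeneousPart deg φ)
    ((hfree.submodule hker).bijective_of_sub_apply_mem_smul_top hneg
      (L.sub_homogeneousPart_mem_smul_top (isHomogeneous_gradedRadical hneg)
        (j := (LinearMap.ker f).subtype) (fun _ _ => rfl) hφ)
      fun d l => (L.proj_homogeneousPart deg φ d l).symm)

theorem BoundedBelow.hasProjectiveDimensionLE {D : ModuleCat.{u} A}
    (hD : IsCogeneratorModulo (gradedRadical 𝒜 hneg) D) (n : ℕ) {K : Type u} [AddCommGroup K]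
    [Module A K] {G : ModuleGrading 𝒜 K} {d₀ : ℤ} (hG : G.BoundedBelow d₀)
    [Subsingleton (Ext (ModuleCat.of A K) D (n + 1))] :
    HasProjectiveDimensionLE (ModuleCat.of A K) n := by
  induction n generalizing K with
  | zero =>
    exact (projective_iff_hasProjectiveDimensionLE_zero _).mp
      ((IsProjective.iff_projective K).mp (hG.projective_of_subsingleton_ext_one hneg hD))
  | succ n ih =>
    obtain ⟨ι, deg, f, hf, hfree, hfproj⟩ := hG.exists_free_cover hneg
    have hS := LinearMap.shortExact_shortComplexKer hf
    have hfree_proj : Projective f.shortComplexKer.X₂ :=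
      (IsProjective.iff_projective (ι →₀ A)).mp inferInstance
    have : Subsingleton (Ext (ModuleCat.of A (LinearMap.ker f)) D (n + 1)) :=
      subsingleton_of_forall_eq 0 fun x => by
        obtain ⟨y, rfl⟩ := Ext.contravariant_sequence_exact₁ hS D x (add_comm 1 _)
          (Subsingleton.elim (α := Ext (ModuleCat.of A K) D _) _ _)
        rw [y.eq_zero_of_projective, Ext.comp_zero]
    exact (hS.hasProjectiveDimensionLT_X₃_iff n hfree_proj).mpr
      (ih (hfree.submodule ((free 𝒜 deg).proj_mem_ker G hfproj)))

end ModuleGrading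

end BoundedBelowModules

section GradedModules

open CategoryTheory MulOpposite

theorem isInternal_update_bot_top {ι S : Type*} [DecidableEq ι] [AddCommGroup S] (i : ι) :
    DirectSum.IsInternal (Function.update ⊥ i ⊤ : ι → AddSubgroup S) := by
  let ℳ : ι → AddSubgroup S := Function.update ⊥ i ⊤
  have hi : ℳ i = ⊤ := Function.update_self ..
  let dec : S →+ ⨁ j, ℳ j :=
    (DirectSum.of (fun j => ℳ j) i).comp
      ((AddMonoidHom.id S).codRestrict (ℳ i) fun _ => hi ▸ trivial)
  refine (Decomposition.ofAddHom ℳ dec ?_ ?_).isInternal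
  · exact AddMonoidHom.ext fun s => DirectSum.coeAddMonoidHom_of _ _ _
  · refine DirectSum.addHom_ext fun j s => ?_
    rw [AddMonoidHom.comp_apply, DirectSum.coeAddMonoidHom_of]
    rcases eq_or_ne j i with rfl | hj
    · rfl
    · have hs : s = 0 := Subtype.ext <| AddSubgroup.mem_bot.mp <|
        (show ℳ j = ⊥ from Function.update_of_ne hj _ _) ▸ s.2
      rw [hs, ZeroMemClass.coe_zero, map_zero, map_zero, map_zero]

variable {A : Type u} [Ring A] {𝒜 : ℤ → AddSubgroup A} [GradedRing 𝒜]

theorem isGradedSimpleRight_update_bot_top (hneg : ∀ i < 0, 𝒜 i = ⊥) {S : Type u}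
    [AddCommGroup S] [Module Aᵐᵒᵖ S] [IsSimpleModule Aᵐᵒᵖ S]
    (hS : Module.IsTorsionBySet Aᵐᵒᵖ S (oppositeIdeal (gradedRadical 𝒜 hneg))) :
    IsGradedSimpleRight A 𝒜 S (Function.update ⊥ 0 ⊤) := by
  refine ⟨⟨isInternal_update_bot_top 0, fun i j a s ha hs => ?_⟩, IsSimpleModule.nontrivial Aᵐᵒᵖ S,
    fun p _ => eq_bot_or_eq_top p⟩
  rcases eq_or_ne i 0 with rfl | hi
  · rw [add_zero]
    rcases eq_or_ne j 0 with rfl | hj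
    · rw [Function.update_self]
      trivial
    · rw [Function.update_of_ne hj, Pi.bot_apply, AddSubgroup.mem_bot] at hs
      rw [hs, smul_zero]
      exact zero_mem _
  · have hker : op a ∈ oppositeIdeal (gradedRadical 𝒜 hneg) :=
      mem_oppositeIdeal.mpr (mem_gradedRadical_of_mem hneg hi ha)
    rw [@hS s ⟨op a, hker⟩]
    exact zero_mem _

namespace ModuleGrading

variable {X : Type u} [AddCommGroup X] [Module A X]

theorem smul_quotient_truncGE_eq_zero (G : ModuleGrading 𝒜 X) (hneg : ∀ i < 0, 𝒜 i = ⊥) (d : ℤ)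
    {i : ℤ} (hi : i ≠ 0) {a : A} (ha : a ∈ 𝒜 i)
    (m : G.truncGE hneg d ⧸ (G.truncGE hneg (d + 1)).submoduleOf (G.truncGE hneg d)) :
    a • m = 0 := by
  obtain ⟨m, rfl⟩ := Submodule.mkQ_surjective _ m
  exact (Submodule.Quotient.mk_eq_zero _).mpr (smul_mem_truncGE_add_one hneg
    (Subtype.ext (decompose_of_mem_ne 𝒜 ha hi)) m.2)

theorem hasProjectiveDimensionLE_of_forall_boundedBelow (G : ModuleGrading 𝒜 X)
    (hneg : ∀ i < 0, 𝒜 i = ⊥) {n : ℕ}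
    (h : ∀ (K : Type u) [AddCommGroup K] [Module A K] (H : ModuleGrading 𝒜 K) (d₀ : ℤ),
      H.BoundedBelow d₀ → HasProjectiveDimensionLE (ModuleCat.of A K) n) :
    HasProjectiveDimensionLE (ModuleCat.of A X) n := by
  refine hasProjectiveDimensionLE_of_filtration (T := fun k => G.truncGE hneg (-k))
    (monotone_nat_of_le_succ fun k m hm d hd => hm d (by lia)) (exists_mem_truncGE hneg)
    (h _ (G.submodule fun d _ => proj_mem_truncGE hneg _ d) _
      fun d hd m => Subtype.ext (m.2 d hd))
    fun k => h _ (concentrated fun i hi a ha => ?_) 0 fun d hd m => ?_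
  · have := G.smul_quotient_truncGE_eq_zero hneg (-(k + 1 : ℕ)) hi ha
    rwa [show -((k + 1 : ℕ) : ℤ) + 1 = -k by lia] at this
  · simp [concentrated, hd.ne]

end ModuleGrading

end GradedModules

theorem stmt_1_general (A : Type u) [Ring A] (𝒜 : ℤ → AddSubgroup A) [GradedRing 𝒜]
    (hneg : ∀ i : ℤ, i < 0 → 𝒜 i = ⊥) [IsSemiprimaryRing (𝒜 0)] (ℓ : ℕ)
    (hsimple : ∀ (M : Type u) [AddCommGroup M] [Module Aᵐᵒᵖ M] (ℳ : ℤ → AddSubgroup M),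
      IsGradedSimpleRight A 𝒜 M ℳ → projDim Aᵐᵒᵖ M ≤ (ℓ : ℕ∞))
    (X : Type u) [AddCommGroup X] [Module A X] (𝒳 : ℤ → AddSubgroup X)
    (hX : IsGradedModule A 𝒜 X 𝒳) :
    projDim A X ≤ (ℓ : ℕ∞) := by
  obtain ⟨G⟩ := ModuleGrading.nonempty_of_isGradedModule hX
  obtain ⟨D, hD, hDℓ⟩ := exists_isCogeneratorModulo_hasInjectiveDimensionLE
    (gradedRadical 𝒜 hneg) fun S _ _ _ hS =>
      (projDim_le_iff ℓ S).mp (hsimple S _ (isGradedSimpleRight_update_bot_top hneg hS))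
  refine (projDim_le_iff ℓ X).mpr
    (G.hasProjectiveDimensionLE_of_forall_boundedBelow hneg fun K _ _ H d₀ hH => ?_)
  have := hDℓ.subsingleton _ (ℓ + 1) (ℓ + 1) le_rfl (ModuleCat.of A K)
  exact hH.hasProjectiveDimensionLE hneg hD ℓ

theorem stmt_1 (A : Type u) [Ring A] (𝒜 : ℤ → AddSubgroup A) [GradedRing 𝒜]
    (hneg : ∀ i : ℤ, i < 0 → 𝒜 i = ⊥)
    (hart : IsArtinianRing ↥(𝒜 0)) (ℓ : ℕ)
    (hsimple : ∀ (M : Type u) [AddCommGroup M] [Module Aᵐᵒᵖ M] (ℳ : ℤ → AddSubgroup M),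
      IsGradedSimpleRight A 𝒜 M ℳ → projDim Aᵐᵒᵖ M ≤ (ℓ : ℕ∞))
    (X : Type u) [AddCommGroup X] [Module A X] (𝒳 : ℤ → AddSubgroup X)
    (hX : IsGradedModule A 𝒜 X 𝒳) :
    projDim A X ≤ (ℓ : ℕ∞) :=
  stmt_1_general A 𝒜 hneg ℓ hsimple X 𝒳 hX
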